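/- Let n ≥ 2 be an integer, E a compact connected subset of the closed unit disk of ℂ, and D_1, …, D_n pairwise disjoint nonempty open connected subsets of ℂ whose union equals {z : |z| < 1} \ E. Then for every k ∈ {1, …, n}, the set α_k := (frontier D_k) \ E is contained in the unit circle T, is open in the subspace topology of T, and is connected (hence α_k is a single, possibly empty, open arc of T). -/

import Mathlib

open Complex Metric Set

/-- A continuous function on a preconnected space whose exponential is constant is constant. -/
lemma eq_of_exp_comp_eq {X : Type*} [TopologicalSpace X] [PreconnectedSpace X] {f : X → ℂ}
    (hf : Continuous f) {c : ℂ} (hc : ∀ x, exp (f x) = c) (x y : X) : f x = f y :=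
  isCoveringMap_exp.const_of_comp hf (fun x y ↦ Subtype.ext ((hc x).trans (hc y).symm)) x y

lemma one_sub_div_mem_slitPlane {z w : ℂ} (hz : z ∈ closedBall (0 : ℂ) 1)
    (hw : w ∈ sphere (0 : ℂ) 1) (hzw : z ≠ w) : 1 - z / w ∈ slitPlane := by
  rw [mem_closedBall_zero_iff] at hz
  rw [mem_sphere_zero_iff_norm] at hw
  have hw0 : w ≠ 0 := by rintro rfl; simp at hw
  have hu : ‖z / w‖ ≤ 1 := by rwa [norm_div, hw, div_one]
  refine Or.inl ?_
  rw [sub_re, one_re, sub_pos]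
  refine lt_of_le_of_ne ((re_le_norm _).trans hu) fun h ↦ hzw ?_
  have him : (z / w).im = 0 := by
    have h1 := Complex.sq_norm (z / w)
    rw [normSq_apply, h] at h1
    nlinarith [norm_nonneg (z / w), mul_self_nonneg (z / w).im]
  have : z / w = 1 := Complex.ext h him
  exact (div_eq_one_iff_eq hw0).1 this

lemma arg_one_sub_div_swap {z w : ℂ} (hz : z ∈ sphere (0 : ℂ) 1)
    (hw : w ∈ sphere (0 : ℂ) 1) (hzw : z ≠ w) : arg (1 - w / z) = -arg (1 - z / w) := by
  have hs := one_sub_div_mem_slitPlane (sphere_subset_closedBall hz) hw hzw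
  rw [mem_sphere_zero_iff_norm] at hz hw
  have hconj : 1 - w / z = (starRingEnd ℂ) (1 - z / w) := by
    have h1 : (z / w)⁻¹ = (starRingEnd ℂ) (z / w) := inv_eq_conj (by rw [norm_div, hz, hw, div_one])
    rw [map_sub, map_one, ← h1, inv_div]
  rw [hconj, arg_conj, if_neg (mem_slitPlane_iff_arg.1 hs).1]

lemma arg_one_sub_exp {t : ℝ} (h0 : 0 < t) (h1 : t < 2 * Real.pi) :
    arg (1 - exp (t * I)) = (t - Real.pi) / 2 := by
  have hsin : 0 < 2 * Real.sin (t / 2) :=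
    mul_pos two_pos (Real.sin_pos_of_pos_of_lt_pi (by linarith) (by linarith))
  have key : 1 - exp (t * I) = ((2 * Real.sin (t / 2) : ℝ) : ℂ) *
      (cos (((t - Real.pi) / 2 : ℝ) : ℂ) + sin (((t - Real.pi) / 2 : ℝ) : ℂ) * I) := by
    have e1 : (t - Real.pi) / 2 = t / 2 - Real.pi / 2 := by ring
    have e2 : t = 2 * (t / 2) := by ring
    rw [e1, ← ofReal_cos, ← ofReal_sin, Real.cos_sub_pi_div_two, Real.sin_sub_pi_div_two,
      exp_mul_I, ← ofReal_cos, ← ofReal_sin]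
    rw [e2, Real.cos_two_mul, Real.sin_two_mul, ← e2]
    have h2 := Real.sin_sq_add_cos_sq (t / 2)
    apply Complex.ext <;> simp [-ofReal_sin, -ofReal_cos, pow_two] <;> nlinarith
  rw [key, arg_mul_cos_add_sin_mul_I hsin]
  constructor <;> linarith

/-- A path in the closed disk joining two points `a`, `b` of the unit circle does not separate two
points of a preconnected set which it avoids. -/
lemma arg_sub_arg_eq_of_path {E : Set ℂ} (hE : IsPreconnected E) (hEsub : E ⊆ closedBall (0 : ℂ) 1)
    {a b : ℂ} (ha : a ∈ sphere (0 : ℂ) 1) (hb : b ∈ sphere (0 : ℂ) 1) (γ : Path a b)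
    (hγ : ∀ s, γ s ∈ closedBall (0 : ℂ) 1) (hγE : ∀ s, γ s ∉ E) {z w : ℂ}
    (hz : z ∈ E ∩ sphere (0 : ℂ) 1) (hw : w ∈ E ∩ sphere (0 : ℂ) 1) :
    arg (1 - z / a) - arg (1 - z / b) = arg (1 - w / a) - arg (1 - w / b) := by
  have : PreconnectedSpace E := isPreconnected_iff_preconnectedSpace.1 hE
  have haE : a ∉ E := by simpa using hγE 0
  have hbE : b ∉ E := by simpa using hγE 1
  have ha0 : a ≠ 0 := ne_zero_of_mem_unit_sphere ⟨a, ha⟩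
  have hb0 : b ≠ 0 := ne_zero_of_mem_unit_sphere ⟨b, hb⟩
  have slit {c : ℂ} (hc : c ∈ sphere (0 : ℂ) 1) (hcE : c ∉ E) (x : E) :
      1 - (x : ℂ) / c ∈ slitPlane :=
    one_sub_div_mem_slitPlane (hEsub x.2) hc (fun h ↦ hcE (h ▸ x.2))
  let H : C(unitInterval × E, {z : ℂ // z ≠ 0}) :=
    ⟨fun p ↦ ⟨γ p.1 - p.2, sub_ne_zero.2 fun h ↦ hγE p.1 (h ▸ p.2.2)⟩, by fun_prop⟩
  let f : C(E, ℂ) := ⟨fun x ↦ log a + log (1 - (x : ℂ) / a),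
    continuous_const.add (Continuous.clog (by fun_prop) (slit ha haE))⟩
  have H_zero (x : E) : H (0, x) = ⟨exp (f x), exp_ne_zero _⟩ := by
    apply Subtype.ext
    change γ 0 - (x : ℂ) = exp (log a + log (1 - (x : ℂ) / a))
    rw [exp_add, exp_log ha0, exp_log (slitPlane_ne_zero (slit ha haE x)), γ.source]
    field_simp
  let g := isCoveringMap_exp.liftHomotopy H f H_zero
  have hg (s : unitInterval) (x : E) : exp (g (s, x)) = γ s - x :=
    congrArg Subtype.val (congrFun (isCoveringMap_exp.liftHomotopy_lifts H f H_zero) (s, x))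
  have hg0 (x : E) : g (0, x) = log a + log (1 - (x : ℂ) / a) :=
    isCoveringMap_exp.liftHomotopy_zero H f H_zero x
  have across (x y : E) : g (1, x) - log (1 - (x : ℂ) / b) = g (1, y) - log (1 - (y : ℂ) / b) := by
    refine eq_of_exp_comp_eq (f := fun x : E ↦ g (1, x) - log (1 - (x : ℂ) / b)) (c := b)
      (Continuous.sub (by fun_prop) (Continuous.clog (by fun_prop) (slit hb hbE)))
      (fun x ↦ ?_) x y
    have hne := slitPlane_ne_zero (slit hb hbE x)
    rw [exp_sub, exp_log hne, hg, γ.target, div_eq_iff hne]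
    field_simp
  have along (x : E) (hx : (x : ℂ) ∈ sphere (0 : ℂ) 1) :
      g (1, x) - log (1 - b / x) = g (0, x) - log (1 - a / x) := by
    have hx0 : (x : ℂ) ≠ 0 := ne_zero_of_mem_unit_sphere ⟨(x : ℂ), hx⟩
    have hs (s : unitInterval) : 1 - γ s / (x : ℂ) ∈ slitPlane :=
      one_sub_div_mem_slitPlane (hγ s) hx (fun h ↦ hγE s (h ▸ x.2))
    have := eq_of_exp_comp_eq (f := fun s ↦ g (s, x) - log (1 - γ s / x)) (c := -x)
      (Continuous.sub (by fun_prop) (Continuous.clog (by fun_prop) hs)) (fun s ↦ ?_) 1 0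
    · simpa using this
    · have hne := slitPlane_ne_zero (hs s)
      rw [exp_sub, exp_log hne, hg, div_eq_iff hne]
      field_simp
      ring
  have formula (x : E) (hx : (x : ℂ) ∈ sphere (0 : ℂ) 1) :
      (g (1, x) - log (1 - (x : ℂ) / b)).im
        = arg a + 2 * (arg (1 - (x : ℂ) / a) - arg (1 - (x : ℂ) / b)) := by
    have h1 := along x hx
    rw [hg0] at h1
    have h2 := congrArg Complex.im h1
    simp only [sub_im, add_im, log_im] at h2 ⊢
    rw [arg_one_sub_div_swap hx ha fun h ↦ haE (h ▸ x.2),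
      arg_one_sub_div_swap hx hb fun h ↦ hbE (h ▸ x.2)] at h2
    linarith
  have h1 := formula ⟨z, hz.1⟩ hz.2
  have h2 := formula ⟨w, hw.1⟩ hw.2
  rw [across ⟨z, hz.1⟩ ⟨w, hw.1⟩, h2] at h1
  linarith

lemma mul_exp_mem_sphere {a : ℂ} (ha : a ∈ sphere (0 : ℂ) 1) (t : ℝ) :
    a * exp (t * I) ∈ sphere (0 : ℂ) 1 := by
  rw [mem_sphere_zero_iff_norm] at ha ⊢
  rw [norm_mul, ha, norm_exp_ofReal_mul_I, one_mul]

lemma exists_eq_mul_exp {a b : ℂ} (ha : a ∈ sphere (0 : ℂ) 1) (hb : b ∈ sphere (0 : ℂ) 1)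
    (hab : a ≠ b) : ∃ t : ℝ, 0 < t ∧ t < 2 * Real.pi ∧ b = a * exp (t * I) := by
  have ha0 : a ≠ 0 := ne_zero_of_mem_unit_sphere ⟨a, ha⟩
  rw [mem_sphere_zero_iff_norm] at ha hb
  have hnorm : ‖b / a‖ = 1 := by rw [norm_div, ha, hb, div_one]
  have hexp : exp (arg (b / a) * I) = b / a := by
    simpa only [hnorm, ofReal_one, one_mul] using norm_mul_exp_arg_mul_I (b / a)
  have hb' : b = a * exp (arg (b / a) * I) := by rw [hexp, mul_div_cancel₀ _ ha0]
  rcases lt_trichotomy (arg (b / a)) 0 with h | h | h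
  · refine ⟨arg (b / a) + 2 * Real.pi, by linarith [neg_pi_lt_arg (b / a), Real.pi_pos],
      by linarith, ?_⟩
    have : ((arg (b / a) + 2 * Real.pi : ℝ) : ℂ) * I = arg (b / a) * I + 2 * Real.pi * I := by
      push_cast; ring
    rw [this, exp_periodic, ← hb']
  · rw [h] at hb'
    simp at hb'
    exact absurd hb'.symm hab
  · exact ⟨arg (b / a), h, by linarith [arg_le_pi (b / a), Real.pi_pos], hb'⟩

/-- On the two open arcs cut out by `a` and `b = a * exp (t * I)`, the function
`z ↦ arg (1 - z / a) - arg (1 - z / b)` takes different values. -/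
lemma arg_sub_arg_ne_of_separated {a b : ℂ} (ha0 : a ≠ 0) {t u v : ℝ}
    (hb : b = a * exp (t * I)) (hu0 : 0 < u) (hut : u < t) (htv : t < v) (hv : v < 2 * Real.pi) :
    arg (1 - a * exp (u * I) / a) - arg (1 - a * exp (u * I) / b) ≠
      arg (1 - a * exp (v * I) / a) - arg (1 - a * exp (v * I) / b) := by
  have hdiv (s : ℝ) : a * exp (s * I) / b = exp ((s - t : ℝ) * I) := by
    rw [hb, mul_div_mul_left _ _ ha0, ← exp_sub]
    congr 1
    push_cast
    ring
  have hu' : exp ((u - t : ℝ) * I) = exp ((u - t + 2 * Real.pi : ℝ) * I) := by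
    have : ((u - t + 2 * Real.pi : ℝ) : ℂ) * I = (u - t : ℝ) * I + 2 * Real.pi * I := by
      push_cast; ring
    rw [this, exp_periodic]
  rw [hdiv, hdiv, hu', mul_div_cancel_left₀ _ ha0, mul_div_cancel_left₀ _ ha0,
    arg_one_sub_exp hu0 (by linarith), arg_one_sub_exp (by linarith) (by linarith),
    arg_one_sub_exp (by linarith) hv, arg_one_sub_exp (by linarith) (by linarith)]
  intro h
  linarith [Real.pi_pos]

section Component

variable {E D V : Set ℂ}

lemma frontier_diff_eq (hD : IsOpen D) (hV : IsOpen V) (hDV : Disjoint D V)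
    (hU : D ∪ V = ball (0 : ℂ) 1 \ E) :
    frontier D \ E = (closure D \ E) ∩ sphere (0 : ℂ) 1 := by
  have hDball : D ⊆ ball (0 : ℂ) 1 := fun x hx ↦ (hU.subset (Or.inl hx)).1
  rw [hD.frontier_eq]
  ext x
  constructor
  · rintro ⟨⟨hx, hxD⟩, hxE⟩
    refine ⟨⟨hx, hxE⟩, ?_⟩
    have hle : x ∈ closedBall (0 : ℂ) 1 := closure_ball_subset_closedBall (closure_mono hDball hx)
    rw [mem_closedBall] at hle
    refine le_antisymm hle (not_lt.1 fun hlt ↦ ?_)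
    rcases hU.superset ⟨hlt, hxE⟩ with h | h
    · exact hxD h
    · exact (hDV.closure_left hV).notMem_of_mem_left hx h
  · rintro ⟨⟨hx, hxE⟩, hxs⟩
    exact ⟨⟨hx, fun h ↦ (hDball h).ne hxs⟩, hxE⟩

lemma exists_ball_inter_closedBall_subset (hE : IsClosed E) (hD : IsOpen D) (hV : IsOpen V)
    (hDV : Disjoint D V) (hU : D ∪ V = ball (0 : ℂ) 1 \ E) {a : ℂ} (ha : a ∈ closure D \ E) :
    ∃ r > 0, ball a r ∩ closedBall (0 : ℂ) 1 ⊆ closure D \ E := by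
  obtain ⟨r, hr, hrE⟩ := Metric.isOpen_iff.1 hE.isOpen_compl a ha.2
  refine ⟨r, hr, fun x hx ↦ ⟨?_, hrE hx.1⟩⟩
  have hsub : ball a r ∩ ball (0 : ℂ) 1 ⊆ D := by
    refine ((convex_ball a r).inter (convex_ball 0 1)).isPreconnected.subset_left_of_subset_union
      hD hV hDV (fun y hy ↦ hU.superset ⟨hy.2, hrE hy.1⟩) ?_
    obtain ⟨c, hc, hcD⟩ := mem_closure_iff.1 ha.1 _ isOpen_ball (mem_ball_self hr)
    exact ⟨c, ⟨hc, (hU.subset (Or.inl hcD)).1⟩, hcD⟩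
  rw [← closure_ball (0 : ℂ) one_ne_zero] at hx
  exact closure_mono hsub (isOpen_ball.inter_closure hx)

lemma exists_isOpen_inter_sphere_eq (hE : IsClosed E) (hD : IsOpen D) (hV : IsOpen V)
    (hDV : Disjoint D V) (hU : D ∪ V = ball (0 : ℂ) 1 \ E) :
    ∃ U : Set ℂ, IsOpen U ∧ (closure D \ E) ∩ sphere (0 : ℂ) 1 = U ∩ sphere (0 : ℂ) 1 := by
  choose! r hr hsub using
    fun a (ha : a ∈ closure D \ E) ↦ exists_ball_inter_closedBall_subset hE hD hV hDV hU ha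
  refine ⟨⋃ a ∈ closure D \ E, ball a (r a), isOpen_biUnion fun _ _ ↦ isOpen_ball, ?_⟩
  ext x
  constructor
  · rintro ⟨hx, hxs⟩
    exact ⟨mem_biUnion hx (mem_ball_self (hr x hx)), hxs⟩
  · rintro ⟨hx, hxs⟩
    obtain ⟨a, ha, hxa⟩ := mem_iUnion₂.1 hx
    exact ⟨hsub a ha ⟨hxa, sphere_subset_closedBall hxs⟩, hxs⟩

lemma isPathConnected_closure_diff (hE : IsClosed E) (hD : IsOpen D) (hDc : IsConnected D)
    (hV : IsOpen V) (hDV : Disjoint D V) (hU : D ∪ V = ball (0 : ℂ) 1 \ E) :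
    IsPathConnected (closure D \ E) := by
  have hDball : D ⊆ ball (0 : ℂ) 1 := fun x hx ↦ (hU.subset (Or.inl hx)).1
  have hDK : D ⊆ closure D \ E := fun x hx ↦ ⟨subset_closure hx, (hU.subset (Or.inl hx)).2⟩
  have hDp : IsPathConnected D := hD.isConnected_iff_isPathConnected.1 hDc
  obtain ⟨c, hc⟩ := hDc.nonempty
  refine ⟨c, hDK hc, fun {a} ha ↦ ?_⟩
  obtain ⟨r, hr, hsub⟩ := exists_ball_inter_closedBall_subset hE hD hV hDV hU ha
  obtain ⟨d, hd, hdD⟩ := mem_closure_iff.1 ha.1 _ isOpen_ball (mem_ball_self hr)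
  have hconv : Convex ℝ (ball a r ∩ closedBall (0 : ℂ) 1) :=
    (convex_ball a r).inter (convex_closedBall 0 1)
  have had : d ∈ ball a r ∩ closedBall (0 : ℂ) 1 := ⟨hd, ball_subset_closedBall (hDball hdD)⟩
  have haa : a ∈ ball a r ∩ closedBall (0 : ℂ) 1 :=
    ⟨mem_ball_self hr, closure_ball_subset_closedBall (closure_mono hDball ha.1)⟩
  exact ((hDp.joinedIn c hc d hdD).mono hDK).trans
    (((hconv.isPathConnected ⟨d, had⟩).joinedIn d had a haa).mono hsub)

lemma subset_closure_diff_of_isPreconnected (hE : IsClosed E) (hD : IsOpen D) (hV : IsOpen V)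
    (hDV : Disjoint D V) (hU : D ∪ V = ball (0 : ℂ) 1 \ E) {s : Set ℂ} (hs : IsPreconnected s)
    (hss : s ⊆ sphere (0 : ℂ) 1) (hsE : Disjoint s E) {a : ℂ} (has : a ∈ s) (ha : a ∈ closure D) :
    s ⊆ closure D \ E := by
  obtain ⟨U, hUo, hUeq⟩ := exists_isOpen_inter_sphere_eq hE hD hV hDV hU
  have hmem {x : ℂ} (hx : x ∈ s) : x ∈ closure D ↔ x ∈ U :=
    ⟨fun h ↦ (hUeq.subset ⟨⟨h, hsE.notMem_of_mem_left hx⟩, hss hx⟩).1,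
      fun h ↦ (hUeq.superset ⟨h, hss hx⟩).1.1⟩
  refine fun x hx ↦ ⟨?_, hsE.notMem_of_mem_left hx⟩
  by_contra hxD
  obtain ⟨y, hys, hyU, hyD⟩ := hs U (closure D)ᶜ hUo isClosed_closure.isOpen_compl
    (fun y hy ↦ (em (y ∈ closure D)).imp_left (hmem hy).1) ⟨a, has, (hmem has).1 ha⟩ ⟨x, hx, hxD⟩
  exact hyD ((hmem hys).2 hyU)

lemma isPreconnected_closure_diff_inter_sphere (hE : IsClosed E) (hEc : IsPreconnected E)
    (hEsub : E ⊆ closedBall (0 : ℂ) 1) (hD : IsOpen D) (hDc : IsConnected D)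
    (hV : IsOpen V) (hDV : Disjoint D V) (hU : D ∪ V = ball (0 : ℂ) 1 \ E) :
    IsPreconnected ((closure D \ E) ∩ sphere (0 : ℂ) 1) := by
  refine isPreconnected_of_forall_pair fun a ⟨haK, ha⟩ b ⟨hbK, hb⟩ ↦ ?_
  rcases eq_or_ne a b with rfl | hab
  · exact ⟨{a}, singleton_subset_iff.2 ⟨haK, ha⟩, rfl, rfl, isPreconnected_singleton⟩
  have ha0 : a ≠ 0 := ne_zero_of_mem_unit_sphere ⟨a, ha⟩
  obtain ⟨t, ht0, ht1, hbt⟩ := exists_eq_mul_exp ha hb hab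
  let arc : ℝ → ℂ := fun u ↦ a * exp (u * I)
  have harc : Continuous arc := by fun_prop
  have arc_zero : arc 0 = a := by simp [arc]
  have arc_two_pi : arc (2 * Real.pi) = a := by simp [arc, exp_two_pi_mul_I]
  have arc_t : arc t = b := hbt.symm
  have good {x y : ℝ} (hax : a ∈ arc '' Icc x y) (hbx : b ∈ arc '' Icc x y)
      (hdisj : Disjoint (arc '' Icc x y) E) :
      ∃ s ⊆ (closure D \ E) ∩ sphere (0 : ℂ) 1, a ∈ s ∧ b ∈ s ∧ IsPreconnected s := by
    have hs : IsPreconnected (arc '' Icc x y) := isPreconnected_Icc.image _ harc.continuousOn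
    have hss : arc '' Icc x y ⊆ sphere (0 : ℂ) 1 := by
      rintro _ ⟨u, -, rfl⟩
      exact mul_exp_mem_sphere ha u
    exact ⟨_, subset_inter (subset_closure_diff_of_isPreconnected hE hD hV hDV hU hs hss hdisj hax
      haK.1) hss, hax, hbx, hs⟩
  by_cases h1 : Disjoint (arc '' Icc 0 t) E
  · exact good ⟨0, ⟨le_rfl, ht0.le⟩, arc_zero⟩ ⟨t, ⟨ht0.le, le_rfl⟩, arc_t⟩ h1
  by_cases h2 : Disjoint (arc '' Icc t (2 * Real.pi)) E
  · exact good ⟨2 * Real.pi, ⟨ht1.le, le_rfl⟩, arc_two_pi⟩ ⟨t, ⟨le_rfl, ht1.le⟩, arc_t⟩ h2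
  exfalso
  obtain ⟨_, ⟨u, ⟨hu0, hut⟩, rfl⟩, huE⟩ := not_disjoint_iff.1 h1
  obtain ⟨_, ⟨v, ⟨htv, hv⟩, rfl⟩, hvE⟩ := not_disjoint_iff.1 h2
  have hu0' : 0 < u := hu0.lt_of_ne fun h ↦ haK.2 (by rwa [← h, arc_zero] at huE)
  have hut' : u < t := hut.lt_of_ne fun h ↦ hbK.2 (by rwa [h, arc_t] at huE)
  have htv' : t < v := htv.lt_of_ne fun h ↦ hbK.2 (by rwa [← h, arc_t] at hvE)
  have hv' : v < 2 * Real.pi := hv.lt_of_ne fun h ↦ haK.2 (by rwa [h, arc_two_pi] at hvE)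
  obtain ⟨γ, hγ⟩ := (isPathConnected_closure_diff hE hD hDc hV hDV hU).joinedIn a haK b hbK
  have hDball : D ⊆ ball (0 : ℂ) 1 := fun x hx ↦ (hU.subset (Or.inl hx)).1
  exact arg_sub_arg_ne_of_separated ha0 hbt hu0' hut' htv' hv'
    (arg_sub_arg_eq_of_path hEc hEsub ha hb γ
      (fun s ↦ closure_ball_subset_closedBall (closure_mono hDball (hγ s).1)) (fun s ↦ (hγ s).2)
      ⟨huE, mul_exp_mem_sphere ha u⟩ ⟨hvE, mul_exp_mem_sphere ha v⟩)

end Component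

/-- The set `α k = frontier (D k) \ E` is contained in the unit circle `T`, is open in the
subspace topology of `T`, and is connected — hence a single (possibly empty) open arc. -/
theorem frontier_diff_is_open_arc (n : ℕ) (hn : 2 ≤ n) (E : Set ℂ)
    (hEcompact : IsCompact E) (hEconn : IsConnected E)
    (hEsub : E ⊆ closedBall (0 : ℂ) 1)
    (D : Fin n → Set ℂ)
    (hDdisj : ∀ i j : Fin n, i ≠ j → Disjoint (D i) (D j))
    (hDne : ∀ k, (D k).Nonempty)
    (hDopen : ∀ k, IsOpen (D k))
    (hDconn : ∀ k, IsConnected (D k))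
    (hDunion : (⋃ k, D k) = ball (0 : ℂ) 1 \ E) :
    ∀ k : Fin n,
      frontier (D k) \ E ⊆ sphere (0 : ℂ) 1 ∧
      (∃ U : Set ℂ, IsOpen U ∧ frontier (D k) \ E = U ∩ sphere (0 : ℂ) 1) ∧
      IsPreconnected (frontier (D k) \ E) := by
  intro k
  have hV : IsOpen (⋃ j ≠ k, D j) := isOpen_biUnion fun j _ ↦ hDopen j
  have hDV : Disjoint (D k) (⋃ j ≠ k, D j) :=
    disjoint_iUnion₂_right.2 fun j hj ↦ hDdisj k j hj.symm
  have hU : D k ∪ (⋃ j ≠ k, D j) = ball (0 : ℂ) 1 \ E := by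
    rw [← hDunion]
    ext x
    simp only [mem_union, mem_iUnion, exists_prop]
    constructor
    · rintro (h | ⟨j, -, h⟩)
      exacts [⟨k, h⟩, ⟨j, h⟩]
    · rintro ⟨j, h⟩
      rcases eq_or_ne j k with rfl | hj
      exacts [Or.inl h, Or.inr ⟨j, hj, h⟩]
  have hE := hEcompact.isClosed
  rw [frontier_diff_eq (hDopen k) hV hDV hU]
  exact ⟨inter_subset_right, exists_isOpen_inter_sphere_eq hE (hDopen k) hV hDV hU,
    isPreconnected_closure_diff_inter_sphere hE hEconn.isPreconnected hEsub (hDopen k) (hDconn k)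
      hV hDV hU⟩
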